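/- Let μ > 4·ln 2 be real and define φ : (1/3, 1) → ℝ by φ(λ) = (μ/2)·(3λ² − 2λ + 1) − λ·ln λ − (1 − λ)·ln((1 − λ)/2). Then there is a unique λ_max ∈ (1/3, 1) such that φ is strictly increasing on (1/3, λ_max] and strictly decreasing on [λ_max, 1); in particular φ has a unique critical point in (1/3, 1) and it is the strict maximum of φ on (1/3,1). -/

import Mathlib

/-!
The derivative of `φ` on `(0, 1)` is `g(x) = μ (3x - 1) - ln x + ln ((1 - x)/2)`, which vanishes at
`1/3`, and `g'(x) = 3μ - 1/(x(1 - x))`. With `s = √(1 - 4/(3μ))`, which lies in `(1/3, 1)` because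
`μ > 4 ln 2 > 3/2`, the sign of `g'` is that of `s² - (2x - 1)²`. So `g` increases on `[1/3, c]` and
decreases on `[c, 1)`, where `c = (1 + s)/2`. Hence `g > 0` on `(1/3, c]`; as `g` is negative close
to `1`, it has exactly one zero in `(c, 1)`, with `g > 0` before it and `g < 0` after it
(`exists_sign_change`). This zero is `λ_max`.
-/

/-- The exponential growth rate of the total-spins Gibbs density along the line of equal
blue and green counts: `φ(λ) = (μ/2)(3λ² − 2λ + 1) − λ·ln λ − (1 − λ)·ln((1 − λ)/2)`. -/
noncomputable def phiRate (μ : ℝ) (lam : ℝ) : ℝ :=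
  (μ / 2) * (3 * lam ^ 2 - 2 * lam + 1) - lam * Real.log lam -
    (1 - lam) * Real.log ((1 - lam) / 2)

/-- The derivative of `phiRate μ` on `(0, 1)`. -/
noncomputable def phiSlope (μ x : ℝ) : ℝ :=
  μ * (3 * x - 1) - Real.log x + Real.log ((1 - x) / 2)

lemma hasDerivAt_phiRate (μ : ℝ) {x : ℝ} (h0 : 0 < x) (h1 : x < 1) :
    HasDerivAt (phiRate μ) (phiSlope μ x) x := by
  have hx : HasDerivAt (fun y : ℝ => y) 1 x := hasDerivAt_id x
  have hne : (1 - x) / 2 ≠ 0 := by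
    have : 0 < (1 - x) / 2 := by linarith
    exact this.ne'
  have hq := ((((hx.pow 2).const_mul 3).sub (hx.const_mul 2)).add_const 1).const_mul (μ / 2)
  have hl := hx.mul (hx.log h0.ne')
  have hr := (hx.const_sub 1).mul (((hx.const_sub 1).div_const 2).log hne)
  refine ((hq.sub hl).sub hr).congr_deriv ?_
  have h1' : 1 - x ≠ 0 := by linarith
  unfold phiSlope
  field_simp
  ring

lemma hasDerivAt_phiSlope (μ : ℝ) {x : ℝ} (h0 : 0 < x) (h1 : x < 1) :
    HasDerivAt (phiSlope μ) (3 * μ - 1 / (x * (1 - x))) x := by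
  have hx : HasDerivAt (fun y : ℝ => y) 1 x := hasDerivAt_id x
  have hne : (1 - x) / 2 ≠ 0 := by
    have : 0 < (1 - x) / 2 := by linarith
    exact this.ne'
  have hq := ((hx.const_mul 3).sub_const 1).const_mul μ
  refine ((hq.sub (hx.log h0.ne')).add
    (((hx.const_sub 1).div_const 2).log hne)).congr_deriv ?_
  have h1' : 1 - x ≠ 0 := by linarith
  field_simp
  ring

lemma phiSlope_third (μ : ℝ) : phiSlope μ (1 / 3) = 0 := by
  unfold phiSlope
  norm_num

/-- The point `1 - 2 exp (-(2μ + 1))` is a witness: there `ln ((1 - x)/2) = -(2μ + 1)`, while the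
other two terms are below `2μ` and `1`. -/
lemma exists_phiSlope_neg {μ : ℝ} (hμ : 3 / 2 < μ) :
    ∃ x ∈ Set.Ioo (1 / 2 : ℝ) 1, phiSlope μ x < 0 := by
  have hE : 0 < Real.exp (-(2 * μ + 1)) := Real.exp_pos _
  have hE4 : Real.exp (-(2 * μ + 1)) < 1 / 4 := by
    have h := Real.add_one_le_exp (2 * μ + 1)
    rw [Real.exp_neg, ← one_div]
    exact one_div_lt_one_div_of_lt (by norm_num) (by linarith)
  refine ⟨1 - 2 * Real.exp (-(2 * μ + 1)), ⟨by linarith, by linarith⟩, ?_⟩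
  have hlog : Real.log ((1 - (1 - 2 * Real.exp (-(2 * μ + 1)))) / 2) = -(2 * μ + 1) := by
    rw [show (1 - (1 - 2 * Real.exp (-(2 * μ + 1)))) / 2 = Real.exp (-(2 * μ + 1)) by ring,
      Real.log_exp]
  unfold phiSlope
  rw [hlog]
  have hx := Real.one_sub_inv_le_log_of_pos
    (show 0 < 1 - 2 * Real.exp (-(2 * μ + 1)) by linarith)
  have hinv : (1 - 2 * Real.exp (-(2 * μ + 1)))⁻¹ < 2 := by
    rw [inv_lt_comm₀ (by linarith) (by norm_num)]
    linarith
  nlinarith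

/-- The turning point `(1 + s)/2` of `phiSlope μ`, where `s² = 1 - 4/(3μ)`. -/
lemma exists_turning_point {μ : ℝ} (hμ : 3 / 2 < μ) :
    ∃ c ∈ Set.Ioo (1 / 3 : ℝ) 1, StrictMonoOn (phiSlope μ) (Set.Icc (1 / 3) c) ∧
      StrictAntiOn (phiSlope μ) (Set.Ico c 1) := by
  obtain ⟨s, hs3, hs1, hs⟩ : ∃ s : ℝ, 1 / 3 < s ∧ s < 1 ∧ 3 * μ * (1 - s ^ 2) = 4 := by
    have hlt : 4 / (3 * μ) < 8 / 9 := by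
      rw [div_lt_iff₀ (by linarith)]
      linarith
    have hpos : 0 < 4 / (3 * μ) := by positivity
    refine ⟨√(1 - 4 / (3 * μ)), ?_, ?_, ?_⟩
    · exact Real.lt_sqrt_of_sq_lt (by norm_num; linarith)
    · rw [Real.sqrt_lt' one_pos]
      linarith
    · rw [Real.sq_sqrt (by linarith)]
      have : μ ≠ 0 := by linarith
      field_simp
      ring
  refine ⟨(1 + s) / 2, ⟨by linarith, by linarith⟩, ?_, ?_⟩
  · refine strictMonoOn_of_deriv_pos (convex_Icc _ _) (fun x hx => ?_) (fun x hx => ?_)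
    · exact (hasDerivAt_phiSlope μ (by linarith [hx.1])
        (by linarith [hx.2])).continuousAt.continuousWithinAt
    · rw [interior_Icc] at hx
      obtain ⟨hx1, hx2⟩ := hx
      have hx0 : 0 < x := by linarith
      have hx1' : x < 1 := by linarith
      rw [(hasDerivAt_phiSlope μ hx0 hx1').deriv, sub_pos,
        div_lt_iff₀ (mul_pos hx0 (sub_pos.2 hx1'))]
      have h : 0 < (s - (2 * x - 1)) * (s + (2 * x - 1)) :=
        mul_pos (by linarith) (by linarith)
      nlinarith [mul_pos (show 0 < μ by linarith) h]
  · refine strictAntiOn_of_deriv_neg (convex_Ico _ _) (fun x hx => ?_) (fun x hx => ?_)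
    · exact (hasDerivAt_phiSlope μ (by linarith [hx.1]) hx.2).continuousAt.continuousWithinAt
    · rw [interior_Ico] at hx
      obtain ⟨hx1, hx1'⟩ := hx
      have hx0 : 0 < x := by linarith
      rw [(hasDerivAt_phiSlope μ hx0 hx1').deriv, sub_neg,
        lt_div_iff₀ (mul_pos hx0 (sub_pos.2 hx1'))]
      have h : 0 < ((2 * x - 1) - s) * (s + (2 * x - 1)) :=
        mul_pos (by linarith) (by linarith)
      nlinarith [mul_pos (show 0 < μ by linarith) h]

lemma exists_sign_change {μ : ℝ} (hμ : 3 / 2 < μ) :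
    ∃ m ∈ Set.Ioo (1 / 3 : ℝ) 1, (∀ x ∈ Set.Ioo (1 / 3) m, 0 < phiSlope μ x) ∧
      ∀ x ∈ Set.Ioo m 1, phiSlope μ x < 0 := by
  obtain ⟨c, ⟨hc3, hc1⟩, hmono, hanti⟩ := exists_turning_point hμ
  obtain ⟨b, ⟨hb2, hb1⟩, hb⟩ := exists_phiSlope_neg hμ
  have hpos : ∀ x, 1 / 3 < x → x ≤ c → 0 < phiSlope μ x := fun x hx hxc => by
    have h := hmono ⟨le_rfl, hc3.le⟩ ⟨hx.le, hxc⟩ hx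
    rwa [phiSlope_third] at h
  have hcb : c < b := by
    by_contra! h
    linarith [hpos b (by linarith) h]
  have hcont : ContinuousOn (phiSlope μ) (Set.Icc c b) := fun x hx =>
    (hasDerivAt_phiSlope μ (by linarith [hx.1])
      (by linarith [hx.2])).continuousAt.continuousWithinAt
  obtain ⟨m, ⟨hm1, hm2⟩, hm⟩ :=
    intermediate_value_Icc' hcb.le hcont ⟨hb.le, (hpos c hc3 le_rfl).le⟩
  refine ⟨m, ⟨by linarith, by linarith⟩, fun x hx => ?_, fun x hx => ?_⟩
  · rcases le_or_gt x c with h | h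
    · exact hpos x hx.1 h
    · have := hanti ⟨h.le, by linarith [hx.2]⟩ ⟨hm1, by linarith⟩ hx.2
      linarith
  · have := hanti ⟨hm1, by linarith⟩ ⟨by linarith [hx.1], hx.2⟩ hx.1
    linarith

/-- for `μ > 4·ln 2` there is a unique `λ_max ∈ (1/3, 1)` such that `φ` is
strictly increasing on `(1/3, λ_max]` and strictly decreasing on `[λ_max, 1)`; in
particular it is the strict maximum of `φ` on `(1/3, 1)`. -/
theorem phiRate_unimodal :
    ∀ μ : ℝ, 4 * Real.log 2 < μ →
      ∃! lmax : ℝ, lmax ∈ Set.Ioo (1/3 : ℝ) 1 ∧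
        StrictMonoOn (phiRate μ) (Set.Ioc (1/3 : ℝ) lmax) ∧
        StrictAntiOn (phiRate μ) (Set.Ico lmax (1 : ℝ)) ∧
        ∀ x ∈ Set.Ioo (1/3 : ℝ) 1, x ≠ lmax → phiRate μ x < phiRate μ lmax := by
  intro μ hμ
  obtain ⟨m, ⟨hm3, hm1⟩, hp, hn⟩ :=
    exists_sign_change (μ := μ) (by linarith [Real.log_two_gt_d9])
  have hmono : StrictMonoOn (phiRate μ) (Set.Ioc (1/3 : ℝ) m) := by
    refine strictMonoOn_of_deriv_pos (convex_Ioc _ _) (fun x hx => ?_) (fun x hx => ?_)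
    · exact (hasDerivAt_phiRate μ (by linarith [hx.1])
        (by linarith [hx.2])).continuousAt.continuousWithinAt
    · rw [interior_Ioc] at hx
      rw [(hasDerivAt_phiRate μ (by linarith [hx.1]) (by linarith [hx.2])).deriv]
      exact hp x hx
  have hanti : StrictAntiOn (phiRate μ) (Set.Ico m (1 : ℝ)) := by
    refine strictAntiOn_of_deriv_neg (convex_Ico _ _) (fun x hx => ?_) (fun x hx => ?_)
    · exact (hasDerivAt_phiRate μ (by linarith [hx.1]) hx.2).continuousAt.continuousWithinAt
    · rw [interior_Ico] at hx
      rw [(hasDerivAt_phiRate μ (by linarith [hx.1]) hx.2).deriv]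
      exact hn x hx
  have hmax : ∀ x ∈ Set.Ioo (1/3 : ℝ) 1, x ≠ m → phiRate μ x < phiRate μ m := by
    intro x hx hne
    rcases lt_or_gt_of_ne hne with h | h
    · exact hmono ⟨hx.1, h.le⟩ ⟨hm3, le_rfl⟩ h
    · exact hanti ⟨le_rfl, hm1⟩ ⟨h.le, hx.2⟩ h
  refine ⟨m, ⟨⟨hm3, hm1⟩, hmono, hanti, hmax⟩, ?_⟩
  -- Two distinct strict maxima would each exceed the other.
  rintro y ⟨hy, -, -, hymax⟩
  by_contra hne
  exact lt_asymm (hmax y hy hne) (hymax m ⟨hm3, hm1⟩ (Ne.symm hne))
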